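/- arXiv:1110.5038 — 4 statements merged into one kernel-verified Lean document; each statement's English description precedes it below -/
import Mathlib

section
/- For every integer N ≥ 2 and every nonzero matrix X ∈ M_{m×n}(ℤ/Nℤ) there exist invertible matrices Q ∈ GL(m, ℤ/Nℤ) and T ∈ GL(n, ℤ/Nℤ) such that QXT is diagonal (its (i,j)-entry is 0 whenever i ≠ j) and each diagonal entry divides the next, i.e., (QXT)_{i+1,i+1} lies in the ideal generated by (QXT)_{i,i} for all i < min(m,n). -/
open Matrix

/-!
Equivalences of matrices map along ring homomorphisms and matrices lift along surjective ones such
as `ℤ → ℤ/N`, so it suffices to reduce a matrix to Smith normal form over a principal ideal domain.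

Among all matrices equivalent to a given one, choose `B` whose upper left entry `d` is minimal for
divisibility. A Bézout column operation replaces `d` by the gcd of `d` and another entry of the
first row, so minimality forces `d` to divide the whole first row, and likewise the first column.
Clearing both turns `B` into a block matrix `diag(d, C)`. Adding a lower row to the first one keeps
the corner `d` and exposes a row of `C`, so `d` divides every entry of `C`, hence every entry of any
matrix equivalent to `C`, and induction applies to `C`.
-/

section Bezout

variable {R : Type*} [CommRing R]

theorem exists_isCoprime_mul_add_mul_dvd [IsDomain R] [IsBezout R] (a b : R) :
    ∃ x y : R, IsCoprime x y ∧ a * x + b * y ∣ a ∧ a * x + b * y ∣ b := by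
  by_cases h : a = 0 ∧ b = 0
  · exact ⟨1, 0, isCoprime_one_left, by simp [h.1], by simp [h.2]⟩
  obtain ⟨x, y, hxy⟩ := IsBezout.gcd_eq_sum a b
  obtain ⟨a', ha⟩ := IsBezout.gcd_dvd_left a b
  obtain ⟨b', hb⟩ := IsBezout.gcd_dvd_right a b
  have hgcd : a * x + b * y = IsBezout.gcd a b := by linear_combination hxy
  have hne : IsBezout.gcd a b ≠ 0 := fun h0 => h ⟨by simpa [h0] using ha, by simpa [h0] using hb⟩
  have hcoprime : a' * x + b' * y = 1 :=
    mul_left_cancel₀ hne (by linear_combination hgcd - x * ha - y * hb)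
  exact ⟨x, y, ⟨a', b', hcoprime⟩, hgcd ▸ ⟨a', ha⟩, hgcd ▸ ⟨b', hb⟩⟩

variable {ι : Type*} [Fintype ι] [DecidableEq ι]

theorem exists_isUnit_det_col_eq {i j : ι} (hij : i ≠ j) {x y : R} (h : IsCoprime x y) :
    ∃ T : Matrix ι ι R, IsUnit T.det ∧ T.col i = Pi.single i x + Pi.single j y := by
  obtain ⟨M, hx, hy⟩ := h.exists_SL2_col 0
  let E : Matrix ι (Fin 2) R := (1 : Matrix ι ι R).submatrix id ![i, j]
  have hE : Eᵀ * E = 1 := by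
    have hinj : Function.Injective ![i, j] := by
      simp [Function.Injective, Fin.forall_fin_two, hij, hij.symm]
    rw [transpose_submatrix, transpose_one, ← submatrix_mul _ _ _ _ _ Function.bijective_id,
      Matrix.one_mul, submatrix_one _ hinj]
  let F : Matrix (Fin 2) ι R := (M.1 - 1) * Eᵀ
  have hF (k : Fin 2) : F k i = (M.1 - 1) k 0 := by
    simp only [F, Matrix.mul_apply, Fin.sum_univ_two]
    simp [E, Matrix.one_apply, hij]
  refine ⟨1 + E * F, ?_, ?_⟩
  · -- The Weinstein–Aronszajn identity reduces this determinant to that of `M`.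
    rw [det_one_add_mul_comm, Matrix.mul_assoc, hE, Matrix.mul_one, add_sub_cancel, M.det_coe]
    exact isUnit_one
  · ext k
    rw [col_apply, Matrix.add_apply, Matrix.mul_apply, Fin.sum_univ_two, hF, hF]
    by_cases hk : k = i <;> simp [E, Matrix.one_apply, Pi.single_apply, hx, hy, hk, hij]

end Bezout

section Equivalence

variable {R : Type*} [CommRing R]
variable {ι κ : Type*} [Fintype ι] [Fintype κ] [DecidableEq ι] [DecidableEq κ]

/-- Equivalence of rectangular matrices over a commutative ring: `B = Q * A * T` with `Q` and `T`
invertible. Invertibility is expressed by determinants, which makes it easy to transport. -/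
def MatrixEquivalent (A B : Matrix ι κ R) : Prop :=
  ∃ (Q : Matrix ι ι R) (T : Matrix κ κ R), IsUnit Q.det ∧ IsUnit T.det ∧ Q * A * T = B

namespace MatrixEquivalent

variable {A B C : Matrix ι κ R}

theorem refl (A : Matrix ι κ R) : MatrixEquivalent A A :=
  ⟨1, 1, by simp, by simp, by simp⟩

theorem trans (hAB : MatrixEquivalent A B) (hBC : MatrixEquivalent B C) :
    MatrixEquivalent A C := by
  obtain ⟨Q, T, hQ, hT, rfl⟩ := hAB
  obtain ⟨Q', T', hQ', hT', rfl⟩ := hBC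
  exact ⟨Q' * Q, T * T', det_mul Q' Q ▸ hQ'.mul hQ, det_mul T T' ▸ hT.mul hT',
    by simp only [Matrix.mul_assoc]⟩

theorem transpose (h : MatrixEquivalent A B) : MatrixEquivalent Aᵀ Bᵀ := by
  obtain ⟨Q, T, hQ, hT, rfl⟩ := h
  exact ⟨Tᵀ, Qᵀ, by rwa [det_transpose], by rwa [det_transpose],
    by simp only [transpose_mul, Matrix.mul_assoc]⟩

theorem map {S : Type*} [CommRing S] (h : MatrixEquivalent A B) (f : R →+* S) :
    MatrixEquivalent (A.map f) (B.map f) := by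
  obtain ⟨Q, T, hQ, hT, rfl⟩ := h
  exact ⟨Q.map f, T.map f, by simpa [RingHom.map_det] using hQ.map f,
    by simpa [RingHom.map_det] using hT.map f, by simp only [Matrix.map_mul]⟩

theorem mul_right (A : Matrix ι κ R) {T : Matrix κ κ R} (hT : IsUnit T.det) :
    MatrixEquivalent A (A * T) :=
  ⟨1, T, by simp, hT, by rw [Matrix.one_mul]⟩

theorem dvd_apply {d : R} (h : MatrixEquivalent A B) (hA : ∀ i j, d ∣ A i j) (i : ι) (j : κ) :
    d ∣ B i j := by
  obtain ⟨Q, T, -, -, rfl⟩ := h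
  simp only [Matrix.mul_apply]
  exact Finset.dvd_sum fun k _ =>
    (Finset.dvd_sum fun l _ => (hA l k).mul_left (Q i l)).mul_right (T k j)

theorem add_vecMulVec_row (A : Matrix ι κ R) {i : ι} {c : ι → R} (hc : c i = 0) :
    MatrixEquivalent A (A + vecMulVec c (A.row i)) := by
  refine ⟨1 + vecMulVec c (Pi.single i 1), 1, ?_, by simp, ?_⟩
  · rw [vecMulVec_eq Unit, det_one_add_replicateCol_mul_replicateRow, single_one_dotProduct, hc]
    simp
  · rw [Matrix.mul_one, Matrix.add_mul, Matrix.one_mul, vecMulVec_mul, single_one_vecMul]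

theorem add_vecMulVec_col (A : Matrix ι κ R) {j : κ} {c : κ → R} (hc : c j = 0) :
    MatrixEquivalent A (A + vecMulVec (A.col j) c) := by
  simpa [transpose_vecMulVec, row_transpose] using (add_vecMulVec_row Aᵀ hc).transpose

theorem exists_apply_dvd_apply [IsDomain R] [IsBezout R] (A : Matrix ι κ R) (i : ι) (j k : κ) :
    ∃ B, MatrixEquivalent A B ∧ B i j ∣ A i j ∧ B i j ∣ A i k := by
  obtain rfl | hjk := eq_or_ne j k
  · exact ⟨A, refl A, dvd_rfl, dvd_rfl⟩
  obtain ⟨x, y, hxy, hj, hk⟩ := exists_isCoprime_mul_add_mul_dvd (A i j) (A i k)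
  obtain ⟨T, hT, hcol⟩ := exists_isUnit_det_col_eq hjk hxy
  have hentry : (A * T) i j = A i j * x + A i k * y := by
    change A i ⬝ᵥ T.col j = _
    rw [hcol, dotProduct_add, dotProduct_single, dotProduct_single]
  exact ⟨A * T, mul_right A hT, hentry ▸ hj, hentry ▸ hk⟩

end MatrixEquivalent

end Equivalence

section DiagCons

variable {R : Type*} [CommRing R] {l m n : ℕ}

/-- The block diagonal matrix `diag(a, A)` obtained from a possibly rectangular matrix `A` by
adding a first row and a first column, used for inductions on the size of a matrix. -/
def diagCons (a : R) (A : Matrix (Fin m) (Fin n) R) : Matrix (Fin (m + 1)) (Fin (n + 1)) R :=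
  Matrix.of (Fin.cons (Fin.cons a 0) fun i => Fin.cons 0 (A i))

@[simp]
theorem diagCons_zero_zero (a : R) (A : Matrix (Fin m) (Fin n) R) : diagCons a A 0 0 = a := rfl

@[simp]
theorem diagCons_zero_succ (a : R) (A : Matrix (Fin m) (Fin n) R) (j : Fin n) :
    diagCons a A 0 j.succ = 0 := rfl

@[simp]
theorem diagCons_succ_zero (a : R) (A : Matrix (Fin m) (Fin n) R) (i : Fin m) :
    diagCons a A i.succ 0 = 0 := rfl

@[simp]
theorem diagCons_succ_succ (a : R) (A : Matrix (Fin m) (Fin n) R) (i : Fin m) (j : Fin n) :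
    diagCons a A i.succ j.succ = A i j := rfl

theorem eq_diagCons {B : Matrix (Fin (m + 1)) (Fin (n + 1)) R} (hrow : ∀ j : Fin n, B 0 j.succ = 0)
    (hcol : ∀ i : Fin m, B i.succ 0 = 0) :
    B = diagCons (B 0 0) (B.submatrix Fin.succ Fin.succ) := by
  ext i j
  cases i using Fin.cases <;> cases j using Fin.cases <;> simp [hrow, hcol]

theorem diagCons_mul_diagCons (a b : R) (A : Matrix (Fin l) (Fin m) R)
    (B : Matrix (Fin m) (Fin n) R) :
    diagCons a A * diagCons b B = diagCons (a * b) (A * B) := by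
  ext i j
  cases i using Fin.cases <;> cases j using Fin.cases <;>
    simp [Matrix.mul_apply, Fin.sum_univ_succ]

theorem det_diagCons (a : R) (A : Matrix (Fin n) (Fin n) R) :
    (diagCons a A).det = a * A.det := by
  have hminor : (diagCons a A).submatrix Fin.succ Fin.succ = A := rfl
  simp [det_succ_row_zero, Fin.sum_univ_succ, hminor]

theorem MatrixEquivalent.diagCons {A B : Matrix (Fin m) (Fin n) R} (h : MatrixEquivalent A B)
    (a : R) : MatrixEquivalent (diagCons a A) (diagCons a B) := by
  obtain ⟨Q, T, hQ, hT, rfl⟩ := h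
  exact ⟨_root_.diagCons 1 Q, _root_.diagCons 1 T, by simpa [det_diagCons] using hQ,
    by simpa [det_diagCons] using hT, by simp [diagCons_mul_diagCons]⟩

theorem exists_matrixEquivalent_diagCons {B : Matrix (Fin (m + 1)) (Fin (n + 1)) R}
    (hrow : ∀ j, B 0 0 ∣ B 0 j) (hcol : ∀ i, B 0 0 ∣ B i 0) :
    ∃ C : Matrix (Fin m) (Fin n) R, MatrixEquivalent B (diagCons (B 0 0) C) := by
  choose r hr using hrow
  choose c hc using hcol
  let B₁ := B + vecMulVec (Fin.cons 0 fun i => -c i.succ) (B.row 0)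
  let B₂ := B₁ + vecMulVec (B₁.col 0) (Fin.cons 0 fun j => -r j.succ)
  have hB₁ : MatrixEquivalent B B₁ := .add_vecMulVec_row B (Fin.cons_zero _ _)
  have hB₂ : MatrixEquivalent B₁ B₂ := .add_vecMulVec_col B₁ (Fin.cons_zero _ _)
  have hcorner : B₂ 0 0 = B 0 0 := by simp [B₂, B₁, vecMulVec_apply]
  have hrow₂ (j : Fin n) : B₂ 0 j.succ = 0 := by
    simp [B₂, B₁, vecMulVec_apply, hr j.succ]
  have hcol₂ (i : Fin m) : B₂ i.succ 0 = 0 := by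
    simp [B₂, B₁, vecMulVec_apply, hc i.succ, mul_comm]
  rw [← hcorner]
  exact ⟨_, eq_diagCons hrow₂ hcol₂ ▸ hB₁.trans hB₂⟩

end DiagCons

section MinimalCorner

variable {R : Type*} [CommRing R] {m n : ℕ}

/-- The upper left entry of `B` is minimal for divisibility among the upper left entries of all
matrices equivalent to `B`; such a matrix is the starting point of the reduction to Smith normal
form. Minimality is up to associates, and a zero corner is allowed. -/
def HasMinimalCorner (B : Matrix (Fin (m + 1)) (Fin (n + 1)) R) : Prop :=
  ∀ C, MatrixEquivalent B C → C 0 0 ∣ B 0 0 → B 0 0 ∣ C 0 0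

theorem exists_matrixEquivalent_hasMinimalCorner [WfDvdMonoid R]
    (A : Matrix (Fin (m + 1)) (Fin (n + 1)) R) :
    ∃ B, MatrixEquivalent A B ∧ HasMinimalCorner B := by
  obtain ⟨B, hAB, hmin⟩ := (InvImage.wf (fun B : Matrix (Fin (m + 1)) (Fin (n + 1)) R => B 0 0)
    wellFounded_dvdNotUnit).has_min {B | MatrixEquivalent A B} ⟨A, .refl A⟩
  refine ⟨B, hAB, fun C hBC hdvd => ?_⟩
  by_contra hndvd
  exact hmin C (hAB.trans hBC) (dvdNotUnit_of_dvd_of_not_dvd hdvd hndvd)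

namespace HasMinimalCorner

variable {B C : Matrix (Fin (m + 1)) (Fin (n + 1)) R}

theorem of_matrixEquivalent (hB : HasMinimalCorner B) (hBC : MatrixEquivalent B C)
    (hcorner : C 0 0 = B 0 0) : HasMinimalCorner C := by
  intro D hCD
  rw [hcorner]
  exact hB D (hBC.trans hCD)

theorem transpose (hB : HasMinimalCorner B) : HasMinimalCorner Bᵀ :=
  fun C hC => hB Cᵀ hC.transpose

variable [IsDomain R] [IsBezout R]

theorem dvd_row (hB : HasMinimalCorner B) (j : Fin (n + 1)) : B 0 0 ∣ B 0 j := by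
  obtain ⟨C, hBC, hcorner, hj⟩ := MatrixEquivalent.exists_apply_dvd_apply B 0 0 j
  exact (hB C hBC hcorner).trans hj

theorem dvd_col (hB : HasMinimalCorner B) (i : Fin (m + 1)) : B 0 0 ∣ B i 0 :=
  hB.transpose.dvd_row i

theorem dvd_of_diagCons {d : R} {A : Matrix (Fin m) (Fin n) R}
    (h : HasMinimalCorner (diagCons d A)) (i : Fin m) (j : Fin n) : d ∣ A i j := by
  let B := diagCons d A + vecMulVec (Pi.single 0 1) ((diagCons d A).row i.succ)
  have hB : MatrixEquivalent (diagCons d A) B := .add_vecMulVec_row _ (by simp)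
  have hcorner : B 0 0 = d := by simp [B, vecMulVec_apply]
  have hrow : B 0 j.succ = A i j := by simp [B, vecMulVec_apply]
  rw [← hcorner, ← hrow]
  exact (h.of_matrixEquivalent hB hcorner).dvd_row j.succ

end HasMinimalCorner

end MinimalCorner

section SmithNormalForm

variable {R : Type*} [CommRing R] {m n : ℕ}

/-- A rectangular matrix is in Smith normal form if it is diagonal and each diagonal entry divides
the next one. The diagonal entries are not normalized up to units. -/
structure IsSmithNormalForm (D : Matrix (Fin m) (Fin n) R) : Prop where
  eq_zero : ∀ (i : Fin m) (j : Fin n), (i : ℕ) ≠ (j : ℕ) → D i j = 0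
  dvd : ∀ i : ℕ, (h : i + 1 < min m n) →
    D ⟨i, by omega⟩ ⟨i, by omega⟩ ∣ D ⟨i + 1, by omega⟩ ⟨i + 1, by omega⟩

namespace IsSmithNormalForm

theorem map {S : Type*} [CommRing S] {D : Matrix (Fin m) (Fin n) R} (hD : IsSmithNormalForm D)
    (f : R →+* S) : IsSmithNormalForm (D.map f) where
  eq_zero i j hij := by rw [map_apply, hD.eq_zero i j hij, map_zero]
  dvd i h := map_dvd f (hD.dvd i h)

theorem diagCons {d : R} {D : Matrix (Fin m) (Fin n) R} (hD : IsSmithNormalForm D)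
    (hd : ∀ i j, d ∣ D i j) : IsSmithNormalForm (diagCons d D) where
  eq_zero i j hij := by
    cases i using Fin.cases <;> cases j using Fin.cases
    · exact absurd rfl hij
    · rfl
    · rfl
    · exact hD.eq_zero _ _ (by simpa using hij)
  dvd i h := by
    cases i with
    | zero => exact hd _ _
    | succ k => exact hD.dvd k (by omega)

end IsSmithNormalForm

theorem exists_matrixEquivalent_isSmithNormalForm [IsDomain R] [IsPrincipalIdealRing R]
    (A : Matrix (Fin m) (Fin n) R) : ∃ D, MatrixEquivalent A D ∧ IsSmithNormalForm D := by
  induction m generalizing n with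
  | zero => exact ⟨A, .refl A, ⟨fun i => i.elim0, fun i h => by omega⟩⟩
  | succ m ih =>
    cases n with
    | zero => exact ⟨A, .refl A, ⟨fun _ j => j.elim0, fun i h => by omega⟩⟩
    | succ n =>
      obtain ⟨B, hAB, hB⟩ := exists_matrixEquivalent_hasMinimalCorner A
      obtain ⟨C, hBC⟩ := exists_matrixEquivalent_diagCons hB.dvd_row hB.dvd_col
      have hdvd : ∀ i j, B 0 0 ∣ C i j := (hB.of_matrixEquivalent hBC rfl).dvd_of_diagCons
      obtain ⟨D, hCD, hD⟩ := ih C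
      exact ⟨diagCons (B 0 0) D, (hAB.trans hBC).trans (hCD.diagCons _),
        hD.diagCons (hCD.dvd_apply hdvd)⟩

end SmithNormalForm

theorem exists_mul_mul_diagonal_dvd_general {D R : Type*} [CommRing D] [IsDomain D]
    [IsPrincipalIdealRing D] [CommRing R] {f : D →+* R} (hf : Function.Surjective f) {m n : ℕ}
    (X : Matrix (Fin m) (Fin n) R) :
    ∃ (Q : Matrix (Fin m) (Fin m) R) (T : Matrix (Fin n) (Fin n) R),
      IsUnit Q.det ∧ IsUnit T.det ∧ IsSmithNormalForm (Q * X * T) := by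
  obtain ⟨Y, rfl⟩ : ∃ Y : Matrix (Fin m) (Fin n) D, Y.map f = X :=
    ⟨X.map (Function.surjInv hf), by ext; simp [Function.surjInv_eq]⟩
  obtain ⟨Z, hYZ, hZ⟩ := exists_matrixEquivalent_isSmithNormalForm Y
  obtain ⟨Q, T, hQ, hT, hQT⟩ := hYZ.map f
  exact ⟨Q, T, hQ, hT, hQT ▸ hZ.map f⟩

/-- For every integer `N ≥ 2` and every nonzero matrix `X ∈ M_{m×n}(ℤ/N)`
there exist invertible matrices `Q ∈ GL(m, ℤ/N)` and `T ∈ GL(n, ℤ/N)` such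
that `QXT` is diagonal (its `(i,j)`-entry is `0` whenever `i ≠ j`) and each
diagonal entry divides the next. -/
theorem exists_mul_mul_diagonal_dvd {N m n : ℕ} (hN : 2 ≤ N)
    (X : Matrix (Fin m) (Fin n) (ZMod N)) (hX : X ≠ 0) :
    ∃ (Q : Matrix (Fin m) (Fin m) (ZMod N))
      (T : Matrix (Fin n) (Fin n) (ZMod N)),
      IsUnit Q.det ∧ IsUnit T.det ∧
      (∀ (i : Fin m) (j : Fin n), (i : ℕ) ≠ (j : ℕ) → (Q * X * T) i j = 0) ∧
      (∀ i : ℕ, (h : i + 1 < min m n) →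
        (Q * X * T) ⟨i, by omega⟩ ⟨i, by omega⟩ ∣
          (Q * X * T) ⟨i + 1, by omega⟩ ⟨i + 1, by omega⟩) := by
  obtain ⟨Q, T, hQ, hT, h⟩ :=
    exists_mul_mul_diagonal_dvd_general (ZMod.ringHom_surjective (Int.castRingHom (ZMod N))) X
  exact ⟨Q, T, hQ, hT, h.eq_zero, h.dvd⟩
end

section
/- Let 0 ≤ s_1 ≤ ... ≤ s_t ≤ k be integers, and let H = { w ∈ (ℤ/p^kℤ)^t : p^{k-s_i} divides w_i for all i }. For any matrix M ∈ M_t(ℤ/p^kℤ), one has wM ∈ H for every w ∈ H if and only if for all indices i > j the entry M_{i,j} is divisible by p^{min(s_i - s_j, k)}, i.e., d_p(M_{i,j}) ≥ s_i - s_j. -/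
open Matrix

/-!
The group `H` is spanned by the vectors `p ^ (k - s i) • e_i`, so it is enough to test `M` on these:
`M` preserves `H` iff `p ^ (k - s j) ∣ p ^ (k - s i) * M i j` for all `i` and `j`. Since the
annihilator of `p ^ a` in `ℤ/p^k` is generated by `p ^ (k - a)`, the common power of `p` cancels and
leaves `p ^ (s i - s j) ∣ M i j`, which says nothing when `s i ≤ s j`.
-/

theorem forall_dvd_vecMul_iff {R ι κ : Type*} [CommSemiring R] [Fintype ι]
    (a : ι → R) (b : κ → R) (M : Matrix ι κ R) :
    (∀ w : ι → R, (∀ i, a i ∣ w i) → ∀ j, b j ∣ (w ᵥ* M) j) ↔ ∀ i j, b j ∣ a i * M i j := by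
  classical
  constructor
  · intro h i j
    have single_dvd (l : ι) : a l ∣ (Pi.single i (a i) : ι → R) l := by
      obtain rfl | hl := eq_or_ne l i
      · rw [Pi.single_eq_same]
      · rw [Pi.single_eq_of_ne hl]
        exact dvd_zero _
    simpa only [single_vecMul, Pi.smul_apply, row_apply, smul_eq_mul] using h _ single_dvd j
  · intro h w hw j
    exact Finset.dvd_sum fun i _ ↦ (h i j).trans (mul_dvd_mul_right (hw i) _)

theorem pow_dvd_pow_mul_iff_of_annihilator {R : Type*} [CommRing R] {π : R} {k : ℕ}
    (hπ : ∀ (a : ℕ) (x : R), π ^ a * x = 0 → π ^ (k - a) ∣ x) {a b : ℕ} (hb : b ≤ k) {x : R} :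
    π ^ b ∣ π ^ a * x ↔ π ^ (b - a) ∣ x := by
  obtain hba | hab := le_total b a
  · simp only [Nat.sub_eq_zero_of_le hba, pow_zero, one_dvd, iff_true]
    exact (pow_dvd_pow π hba).mul_right x
  have pow_split : π ^ b = π ^ a * π ^ (b - a) := (pow_mul_pow_sub π hab).symm
  constructor
  · rintro ⟨y, hy⟩
    have annihilated : π ^ a * (x - π ^ (b - a) * y) = 0 := by
      rw [mul_sub, hy, pow_split, mul_assoc, sub_self]
    have dvd_diff : π ^ (b - a) ∣ x - π ^ (b - a) * y :=
      (pow_dvd_pow π (Nat.sub_le_sub_right hb a)).trans (hπ a _ annihilated)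
    exact (dvd_sub_left (dvd_mul_right _ y)).mp dvd_diff
  · intro h
    rw [pow_split]
    exact mul_dvd_mul_left _ h

theorem vecMul_mem_iff_dvd_general {R ι κ : Type*} [CommRing R] [Fintype ι] {π : R} {k : ℕ}
    (hπ : ∀ (a : ℕ) (x : R), π ^ a * x = 0 → π ^ (k - a) ∣ x)
    (e : ι → ℕ) {d : κ → ℕ} (hd : ∀ j, d j ≤ k) (M : Matrix ι κ R) :
    (∀ w : ι → R, (∀ i, π ^ e i ∣ w i) → ∀ j, π ^ d j ∣ (w ᵥ* M) j) ↔
      ∀ i j, π ^ (d j - e i) ∣ M i j := by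
  simp only [forall_dvd_vecMul_iff, pow_dvd_pow_mul_iff_of_annihilator hπ (hd _)]

theorem pow_sub_dvd_of_natCast_pow_mul_eq_zero {n k : ℕ} (hn : n ≠ 0) (a : ℕ) (x : ZMod (n ^ k))
    (hx : (n : ZMod (n ^ k)) ^ a * x = 0) : (n : ZMod (n ^ k)) ^ (k - a) ∣ x := by
  obtain hka | hak := le_total k a
  · simp only [Nat.sub_eq_zero_of_le hka, pow_zero, one_dvd]
  have : NeZero (n ^ k) := ⟨pow_ne_zero k hn⟩
  obtain ⟨m, rfl⟩ := ZMod.natCast_zmod_surjective x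
  have dvd_nat : n ^ a * n ^ (k - a) ∣ n ^ a * m := by
    rw [pow_mul_pow_sub n hak, ← ZMod.natCast_eq_zero_iff]
    exact_mod_cast hx
  exact_mod_cast Nat.cast_dvd_cast (α := ZMod (n ^ k))
    (Nat.dvd_of_mul_dvd_mul_left (pow_pos hn.pos a) dvd_nat)

theorem forall_pow_sub_dvd_iff_of_monotone {R ι : Type*} [Monoid R] [LinearOrder ι] {s : ι → ℕ}
    (hs : Monotone s) {a : R} {M : Matrix ι ι R} :
    (∀ i j, a ^ (s i - s j) ∣ M i j) ↔ ∀ i j, j < i → a ^ (s i - s j) ∣ M i j := by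
  refine ⟨fun h i j _ ↦ h i j, fun h i j ↦ ?_⟩
  obtain hji | hij := lt_or_ge j i
  · exact h i j hji
  · rw [Nat.sub_eq_zero_of_le (hs hij), pow_zero]
    exact one_dvd _

/-- Let `0 ≤ s_1 ≤ ⋯ ≤ s_t ≤ k` be integers and
`H = { w ∈ (ℤ/p^k)^t : p^{k-s_i} ∣ w_i for all i }`.  For any matrix
`M ∈ M_t(ℤ/p^k)`, one has `wM ∈ H` for every `w ∈ H` if and only if for
all indices `i > j` the entry `M_{i,j}` is divisible by
`p^{min(s_i - s_j, k)}`, i.e. `d_p(M_{i,j}) ≥ s_i - s_j`. -/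
theorem vecMul_mem_iff_dvd {p k t : ℕ} (hp : p.Prime) (hk : 1 ≤ k)
    (s : Fin t → ℕ) (hmono : Monotone s) (hsk : ∀ i, s i ≤ k)
    (M : Matrix (Fin t) (Fin t) (ZMod (p ^ k))) :
    (∀ w ∈ {w : Fin t → ZMod (p ^ k) |
        ∀ i : Fin t, (p : ZMod (p ^ k)) ^ (k - s i) ∣ w i},
      w ᵥ* M ∈ {w : Fin t → ZMod (p ^ k) |
        ∀ i : Fin t, (p : ZMod (p ^ k)) ^ (k - s i) ∣ w i}) ↔
    ∀ i j : Fin t, (j : ℕ) < (i : ℕ) →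
      (p : ZMod (p ^ k)) ^ min (s i - s j) k ∣ M i j := by
  simpa only [Set.mem_ofPred_eq, tsub_tsub_tsub_cancel_left (hsk _), Fin.val_fin_lt,
    forall_pow_sub_dvd_iff_of_monotone hmono, min_eq_left ((Nat.sub_le _ _).trans (hsk _))]
    using vecMul_mem_iff_dvd_general (pow_sub_dvd_of_natCast_pow_mul_eq_zero hp.ne_zero)
      (k - s ·) (fun j ↦ k.sub_le (s j)) M
end

section
/- Let B ∈ M_{t×a}(ℤ/p^kℤ), and choose Q ∈ GL(t, ℤ/p^kℤ) and T ∈ GL(a, ℤ/p^kℤ) such that B⁰ = QBT is in normal form with (B⁰)_{i,j} = δ_{i,j} p^{s_i}. Let S ∈ M_t(ℤ) be an integer matrix invertible over ℤ (det S = ±1), and denote by S̄ its reduction modulo p^k. Then Z(S̄B) = Z(B) if and only if d_p((Q S̄ Q^{-1})_{i,j}) ≥ s_i - s_j for all indices i > j. -/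
open Matrix

/-!
Replacing `w` by `w ᵥ* Q⁻¹` turns `Z(B)` into the submodule `N` of all `v` with `v i * p ^ s i = 0`,
and turns `S̄` into the invertible `M = Q * S̄ * Q⁻¹`; equality of the two zero sets says that `N`
is its own preimage under `M`. If `M` maps `N` into itself, it acts surjectively, hence injectively,
on the finitely generated module `(ℤ/p^k)^t / N`, so the preimage of `N` is no larger than `N`: only
stability of `N` under `M` matters. Stability is a condition on each entry separately: `M i j` must
send `Ann (p ^ s i)` into `Ann (p ^ s j)`, and because `Ann (p ^ r)` is generated by `p ^ (k - r)`,
this says that `p ^ (s i - s j)` divides `M i j`.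
-/

/-- `π` behaves like a uniformizer truncated at `π ^ k = 0`: for `s ≤ k` the annihilator of `π ^ s`
is the ideal generated by `π ^ (k - s)`.  The model is `p` in `ℤ/p^k`, or any nonzerodivisor of a
commutative ring reduced modulo its `k`-th power. -/
def IsTruncatedUniformizer {R : Type*} [CommRing R] (π : R) (k : ℕ) : Prop :=
  ∀ s ≤ k, ∀ x : R, x * π ^ s = 0 ↔ π ^ (k - s) ∣ x

namespace IsTruncatedUniformizer

variable {R : Type*} [CommRing R] {π : R} {k : ℕ}

theorem pow_eq_zero (hπ : IsTruncatedUniformizer π k) : π ^ k = 0 := by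
  simpa using hπ k le_rfl 1

theorem of_ker_eq_span {A : Type*} [CommRing A] {ϖ : A} (hϖ : ϖ ∈ nonZeroDivisors A) {f : A →+* R}
    (hf : Function.Surjective f) (hker : RingHom.ker f = Ideal.span {ϖ ^ k}) :
    IsTruncatedUniformizer (f ϖ) k := by
  have map_eq_zero_iff_dvd (y : A) : f y = 0 ↔ ϖ ^ k ∣ y := by
    rw [← RingHom.mem_ker, hker, Ideal.mem_span_singleton]
  intro s hs x
  constructor
  · intro hx
    obtain ⟨y, rfl⟩ := hf x
    have hdvd : ϖ ^ (k - s) * ϖ ^ s ∣ y * ϖ ^ s := by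
      rwa [pow_sub_mul_pow ϖ hs, ← map_eq_zero_iff_dvd, map_mul, map_pow]
    rw [← map_pow]
    exact map_dvd f ((dvd_cancel_right_mem_nonZeroDivisors (pow_mem hϖ s)).1 hdvd)
  · rintro ⟨c, rfl⟩
    rw [mul_right_comm, pow_sub_mul_pow _ hs, ← map_pow, (map_eq_zero_iff_dvd _).2 dvd_rfl,
      zero_mul]

theorem natCast_zmod {p : ℕ} (hp : p ≠ 0) (k : ℕ) :
    IsTruncatedUniformizer (p : ZMod (p ^ k)) k := by
  have hker : RingHom.ker (Int.castRingHom (ZMod (p ^ k))) = Ideal.span {(p : ℤ) ^ k} := by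
    rw [ZMod.ker_intCastRingHom, Nat.cast_pow]
  simpa using of_ker_eq_span (mem_nonZeroDivisors_of_ne_zero (Nat.cast_ne_zero.2 hp))
    ZMod.intCast_surjective hker

theorem forall_mul_pow_eq_zero_iff_dvd (hπ : IsTruncatedUniformizer π k) {a : ℕ} (ha : a ≤ k)
    (b : ℕ) (m : R) :
    (∀ x, x * π ^ a = 0 → x * m * π ^ b = 0) ↔ π ^ (a - b) ∣ m := by
  constructor
  · intro h
    rcases le_total a b with hab | hba
    · simp [Nat.sub_eq_zero_of_le hab]
    · have hgen : π ^ (k - a) * π ^ a = 0 := by rw [pow_sub_mul_pow π ha, hπ.pow_eq_zero]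
      have hexp : k - (k - a + b) = a - b := by omega
      rw [← hexp, ← hπ (k - a + b) (by omega), pow_add]
      linear_combination h _ hgen
  · rintro ⟨c, rfl⟩ x hx
    calc x * (π ^ (a - b) * c) * π ^ b = x * π ^ (a - b + b) * c := by ring
      _ = x * π ^ a * (π ^ (a - b + b - a) * c) := by
        rw [← pow_mul_pow_sub π (show a ≤ a - b + b by omega)]; ring
      _ = 0 := by rw [hx, zero_mul]

end IsTruncatedUniformizer

theorem comap_eq_self_iff_le_comap_of_surjective {R V : Type*} [Ring R] [OrzechProperty R]
    [AddCommGroup V] [Module R V] [Module.Finite R V] {f : V →ₗ[R] V}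
    (hf : Function.Surjective f) (N : Submodule R V) : N.comap f = N ↔ N ≤ N.comap f := by
  refine ⟨fun h ↦ h.ge, fun h ↦ le_antisymm (fun v hv ↦ ?_) h⟩
  have hsurj : Function.Surjective (N.mapQ N f h) := by
    rw [← LinearMap.range_eq_top, Submodule.range_mapQ, LinearMap.range_eq_top.2 hf,
      Submodule.map_top, Submodule.range_mkQ]
  have hinj := OrzechProperty.injective_of_surjective_endomorphism _ hsurj
  rw [Submodule.mem_comap, ← Submodule.Quotient.mk_eq_zero] at hv
  rw [← Submodule.Quotient.mk_eq_zero]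
  exact hinj (hv.trans (map_zero _).symm)

section ZeroSubmodule

variable {R l m n : Type*} [Semiring R] [Fintype l] [Fintype m]

/-- The zero set `Z(X)` of row vectors `w` with `w ᵥ* X = 0`, as a submodule. -/
def zeroSubmodule (X : Matrix m n R) : Submodule R (m → R) :=
  LinearMap.ker X.vecMulLinear

theorem mem_zeroSubmodule {X : Matrix m n R} {w : m → R} : w ∈ zeroSubmodule X ↔ w ᵥ* X = 0 :=
  Iff.rfl

theorem zeroSubmodule_mul (X : Matrix l m R) (Y : Matrix m n R) :
    zeroSubmodule (X * Y) = (zeroSubmodule Y).comap X.vecMulLinear := by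
  ext w
  simp only [Submodule.mem_comap, mem_zeroSubmodule, vecMulLinear_apply, vecMul_vecMul]

theorem zeroSubmodule_mul_of_isUnit [DecidableEq m] (X : Matrix l m R) {T : Matrix m m R}
    (hT : IsUnit T) : zeroSubmodule (X * T) = zeroSubmodule X := by
  ext w
  rw [mem_zeroSubmodule, mem_zeroSubmodule, ← vecMul_vecMul]
  exact map_eq_zero_iff T.vecMulLinear (vecMul_injective_of_isUnit hT)

theorem mem_zeroSubmodule_diagonal [DecidableEq m] {d v : m → R} :
    v ∈ zeroSubmodule (diagonal d) ↔ ∀ i, v i * d i = 0 := by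
  simp only [mem_zeroSubmodule, funext_iff, vecMul_diagonal, Pi.zero_apply]

theorem zeroSubmodule_eq_diagonal {t a : ℕ} {X : Matrix (Fin t) (Fin a) R} {d : Fin t → R}
    (hX : ∀ i j, X i j = if (i : ℕ) = j then d i else 0) (hd : ∀ i, d i ≠ 0 → (i : ℕ) < a) :
    zeroSubmodule X = zeroSubmodule (diagonal d) := by
  ext v
  have vecMul_X_apply (j : Fin a) :
      (v ᵥ* X) j = ∑ i : Fin t, if (i : ℕ) = j then v i * d i else 0 := by
    simp only [vecMul, dotProduct, hX, mul_ite, mul_zero]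
  rw [mem_zeroSubmodule, mem_zeroSubmodule_diagonal]
  constructor
  · intro hv i
    by_cases hi : d i = 0
    · rw [hi, mul_zero]
    · have hcol := congrFun hv ⟨i, hd i hi⟩
      simpa [vecMul_X_apply, ← Fin.ext_iff] using hcol
  · intro hv
    ext j
    simp [vecMul_X_apply, hv]

theorem zeroSubmodule_diagonal_le_comap_iff [DecidableEq l] [DecidableEq m] (d : l → R) (e : m → R)
    (M : Matrix l m R) :
    zeroSubmodule (diagonal d) ≤ (zeroSubmodule (diagonal e)).comap M.vecMulLinear ↔
      ∀ i j x, x * d i = 0 → x * M i j * e j = 0 := by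
  simp only [SetLike.le_def, Submodule.mem_comap, vecMulLinear_apply, mem_zeroSubmodule_diagonal]
  constructor
  · intro h i j x hx
    have hsingle (i' : l) : (Pi.single i x : l → R) i' * d i' = 0 := by
      obtain rfl | hne := eq_or_ne i' i
      · rwa [Pi.single_eq_same]
      · rw [Pi.single_eq_of_ne hne, zero_mul]
    simpa [single_vecMul] using h hsingle j
  · intro h v hv j
    rw [vecMul, dotProduct, Finset.sum_mul]
    exact Finset.sum_eq_zero fun i _ ↦ h i j (v i) (hv i)

end ZeroSubmodule

section CommRing

variable {R m n : Type*} [CommRing R] [Fintype m]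

theorem isUnit_det_map_intCast [DecidableEq m] {S : Matrix m m ℤ} (hS : IsUnit S.det) :
    IsUnit (S.map (Int.cast : ℤ → R)).det := by
  rw [← Int.cast_det]
  exact hS.map (Int.castRingHom R)

theorem zeroSubmodule_mul_eq_iff_comap_conj [DecidableEq m] (A : Matrix m m R) (B : Matrix m n R)
    {Q : Matrix m m R} (hQ : IsUnit Q) :
    zeroSubmodule (A * B) = zeroSubmodule B ↔
      (zeroSubmodule (Q * B)).comap (Q * A * Q⁻¹).vecMulLinear = zeroSubmodule (Q * B) := by
  have hsurj : Function.Surjective Q.vecMulLinear := vecMul_surjective_iff_isUnit.2 hQ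
  have hconj : Q * A * Q⁻¹ * (Q * B) = Q * (A * B) := by
    rw [Matrix.mul_assoc _ Q⁻¹, nonsing_inv_mul_cancel_left _ _ ((isUnit_iff_isUnit_det Q).1 hQ),
      Matrix.mul_assoc]
  rw [← zeroSubmodule_mul, hconj, zeroSubmodule_mul Q, zeroSubmodule_mul Q,
    (Submodule.comap_injective_of_surjective hsurj).eq_iff]

theorem zeroSubmodule_diagonal_pow_le_comap_iff_dvd [LinearOrder m] {π : R} {k : ℕ}
    (hπ : IsTruncatedUniformizer π k) {s : m → ℕ} (hmono : Monotone s) (hsk : ∀ i, s i ≤ k)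
    (M : Matrix m m R) :
    zeroSubmodule (diagonal fun i ↦ π ^ s i) ≤
        (zeroSubmodule (diagonal fun i ↦ π ^ s i)).comap M.vecMulLinear ↔
      ∀ i j, j < i → π ^ (s i - s j) ∣ M i j := by
  simp only [zeroSubmodule_diagonal_le_comap_iff,
    hπ.forall_mul_pow_eq_zero_iff_dvd (hsk _)]
  refine ⟨fun h i j _ ↦ h i j, fun h i j ↦ ?_⟩
  obtain hji | hij := lt_or_ge j i
  · exact h i j hji
  · simp [Nat.sub_eq_zero_of_le (hmono hij)]

end CommRing

theorem zeroSet_vecMul_eq_iff_dvd_general {R : Type*} [CommRing R] {π : R} {k t a : ℕ}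
    (hπ : IsTruncatedUniformizer π k)
    (B : Matrix (Fin t) (Fin a) R) (Q : Matrix (Fin t) (Fin t) R) (T : Matrix (Fin a) (Fin a) R)
    (hQ : IsUnit Q.det) (hT : IsUnit T.det)
    (s : Fin t → ℕ) (hmono : Monotone s) (hsk : ∀ i, s i ≤ k)
    (hl : ∀ i, s i < k → (i : ℕ) < a)
    (hB0 : ∀ i j, (Q * B * T) i j = if (i : ℕ) = (j : ℕ) then π ^ s i else 0)
    (A : Matrix (Fin t) (Fin t) R) (hA : IsUnit A.det) :
    {w : Fin t → R | w ᵥ* (A * B) = 0} = {w : Fin t → R | w ᵥ* B = 0} ↔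
      ∀ i j : Fin t, (j : ℕ) < (i : ℕ) → π ^ (s i - s j) ∣ (Q * A * Q⁻¹) i j := by
  rw [← isUnit_iff_isUnit_det] at hQ hT hA
  have hM : Function.Surjective (Q * A * Q⁻¹).vecMulLinear :=
    vecMul_surjective_iff_isUnit.2 ((hQ.mul hA).mul (isUnit_nonsing_inv_iff.2 hQ))
  have hd (i : Fin t) (hi : π ^ s i ≠ 0) : (i : ℕ) < a :=
    hl i ((hsk i).lt_of_ne fun hik ↦ hi (hik ▸ hπ.pow_eq_zero))
  let N := zeroSubmodule (diagonal fun i ↦ π ^ s i)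
  have hN : zeroSubmodule (Q * B) = N := by
    rw [← zeroSubmodule_mul_of_isUnit _ hT, zeroSubmodule_eq_diagonal hB0 hd]
  calc _ ↔ zeroSubmodule (A * B) = zeroSubmodule B := SetLike.ext'_iff.symm
    _ ↔ N.comap (Q * A * Q⁻¹).vecMulLinear = N :=
      hN ▸ zeroSubmodule_mul_eq_iff_comap_conj A B hQ
    _ ↔ N ≤ N.comap (Q * A * Q⁻¹).vecMulLinear :=
      comap_eq_self_iff_le_comap_of_surjective hM N
    _ ↔ _ := zeroSubmodule_diagonal_pow_le_comap_iff_dvd hπ hmono hsk _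

/-- Let `B ∈ M_{t×a}(ℤ/p^k)`, and choose `Q ∈ GL(t, ℤ/p^k)` and
`T ∈ GL(a, ℤ/p^k)` such that `B⁰ = QBT` is in normal form with
`(B⁰)_{i,j} = δ_{i,j} p^{s_i}`.  Let `S ∈ M_t(ℤ)` with `det S = ±1`, and
let `S̄` be its reduction mod `p^k`.  Then `Z(S̄B) = Z(B)` if and only if
`d_p((Q S̄ Q⁻¹)_{i,j}) ≥ s_i - s_j` for all `i > j`. -/
theorem zeroSet_vecMul_eq_iff_dvd {p k t a : ℕ} (hp : p.Prime) (hk : 1 ≤ k)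
    (B : Matrix (Fin t) (Fin a) (ZMod (p ^ k)))
    (Q : Matrix (Fin t) (Fin t) (ZMod (p ^ k)))
    (T : Matrix (Fin a) (Fin a) (ZMod (p ^ k)))
    (hQ : IsUnit Q.det) (hT : IsUnit T.det)
    (s : Fin t → ℕ) (hmono : Monotone s) (hsk : ∀ i, s i ≤ k)
    (hl : ∃ l, l ≤ min t a ∧ ∀ i : Fin t, s i < k ↔ (i : ℕ) < l)
    (hB0 : ∀ (i : Fin t) (j : Fin a),
      (Q * B * T) i j = if (i : ℕ) = (j : ℕ)
        then (p : ZMod (p ^ k)) ^ s i else 0)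
    (S : Matrix (Fin t) (Fin t) ℤ) (hS : S.det = 1 ∨ S.det = -1) :
    ({w : Fin t → ZMod (p ^ k) |
        w ᵥ* (S.map (Int.cast : ℤ → ZMod (p ^ k)) * B) = 0} =
      {w : Fin t → ZMod (p ^ k) | w ᵥ* B = 0}) ↔
    ∀ i j : Fin t, (j : ℕ) < (i : ℕ) →
      (p : ZMod (p ^ k)) ^ (s i - s j) ∣
        (Q * S.map (Int.cast : ℤ → ZMod (p ^ k)) * Q⁻¹) i j := by
  obtain ⟨l, hla, hl⟩ := hl
  exact zeroSet_vecMul_eq_iff_dvd_general (.natCast_zmod hp.ne_zero k) B Q T hQ hT s hmono hsk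
    (fun i hi ↦ ((hl i).1 hi).trans_le (hla.trans (min_le_right t a))) hB0 _
    (isUnit_det_map_intCast (Int.isUnit_iff.2 hS))
end

section
/- Let p_1,...,p_g be distinct primes, k_1,...,k_g ≥ 1, N = Π_{γ=1}^g p_γ^{k_γ}, and for each γ let ι_γ : ℤ/p_γ^{k_γ}ℤ → ℤ/Nℤ be the additive embedding sending x to the unique residue class modulo N congruent to x modulo p_γ^{k_γ} and congruent to 0 modulo p_δ^{k_δ} for all δ ≠ γ. Given matrices B_γ ∈ M_{t×a_γ}(ℤ/p_γ^{k_γ}ℤ), let B ∈ M_{t×(Σ_γ a_γ)}(ℤ/Nℤ) be the block matrix whose γ-th block of columns is the entrywise image ι_γ(B_γ). Then for any integer matrix S ∈ M_t(ℤ), Z(SB) = Z(B) in (ℤ/Nℤ)^t if and only if Z(SB_γ) = Z(B_γ) in (ℤ/p_γ^{k_γ}ℤ)^t for every γ ∈ {1,...,g}. -/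
open Matrix

/-!
By the Chinese remainder theorem `ℤ/N` is the product of the rings `ℤ/p_γ^{k_γ}`, and `ι_γ` is the
inclusion of the `γ`-th factor. A vector over a product of rings annihilates the `γ`-th block of
columns exactly when its `γ`-th component annihilates `B_γ`, so the zero set of `B` is the product
of the zero sets of the `B_γ`. Left multiplication by `S` acts componentwise on the blocks, and two
nonempty products of sets agree only if all their factors do.
-/

section ZeroSet

variable {m n R : Type*} [Fintype m] [NonUnitalNonAssocSemiring R]

/-- The zero set `Z(X)` of a matrix: the row vectors `w` with `wX = 0`. -/
def zeroSet (X : Matrix m n R) : Set (m → R) :=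
  {w | w ᵥ* X = 0}

theorem mem_zeroSet {X : Matrix m n R} {w : m → R} : w ∈ zeroSet X ↔ w ᵥ* X = 0 :=
  Iff.rfl

theorem zeroSet_nonempty (X : Matrix m n R) : (zeroSet X).Nonempty :=
  ⟨0, zero_vecMul X⟩

end ZeroSet

theorem univ_pi_eq_univ_pi_iff {κ : Type*} {α : κ → Type*} {s t : ∀ γ, Set (α γ)}
    (hs : ∀ γ, (s γ).Nonempty) : Set.univ.pi s = Set.univ.pi t ↔ ∀ γ, s γ = t γ := by
  have hs_pi : (Set.univ.pi s).Nonempty := Set.univ_pi_nonempty_iff.2 hs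
  refine ⟨fun h γ => ?_, fun h => congrArg _ (funext h)⟩
  calc
    s γ = Function.eval γ '' Set.univ.pi s := (Set.eval_image_univ_pi hs_pi).symm
    _ = Function.eval γ '' Set.univ.pi t := by rw [h]
    _ = t γ := Set.eval_image_univ_pi (h ▸ hs_pi)

section BlockMatrix

variable {κ l m R : Type*} {n : κ → Type*} {A : κ → Type*}
  [NonUnitalNonAssocSemiring R] [∀ γ, NonUnitalNonAssocSemiring (A γ)]

/-- A vector over a product ring `R ≃ ∏ γ, A γ` as the family of its component vectors, the
coordinates in which zero sets of block matrices become products. -/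
def vectorEquivPi (m : Type*) (e : R ≃+* ∀ γ, A γ) : (m → R) ≃ ∀ γ, m → A γ :=
  (Equiv.piCongrRight fun _ => e.toEquiv).trans (Equiv.piComm _)

theorem vectorEquivPi_apply (e : R ≃+* ∀ γ, A γ) (w : m → R) (γ : κ) (i : m) :
    vectorEquivPi m e w γ i = e (w i) γ :=
  rfl

variable [DecidableEq κ]

/-- The block matrix over a product ring `R ≃ ∏ γ, A γ` whose `γ`-th block of columns is the
entrywise image of `B γ` under the inclusion `ι_γ = e.symm ∘ Pi.single γ` of the factor
`A γ` into `R`. -/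
def blockMatrix (e : R ≃+* ∀ γ, A γ) (B : ∀ γ, Matrix m (n γ) (A γ)) :
    Matrix m (Σ γ, n γ) R :=
  of fun i c => e.symm (Pi.single c.1 (B c.1 i c.2))

theorem blockMatrix_apply (e : R ≃+* ∀ γ, A γ) (B : ∀ γ, Matrix m (n γ) (A γ)) (i : m)
    (γ : κ) (j : n γ) : blockMatrix e B i ⟨γ, j⟩ = e.symm (Pi.single γ (B γ i j)) :=
  rfl

variable [Fintype m]

theorem vecMul_blockMatrix_apply (e : R ≃+* ∀ γ, A γ) (B : ∀ γ, Matrix m (n γ) (A γ))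
    (w : m → R) (γ : κ) (j : n γ) :
    (w ᵥ* blockMatrix e B) ⟨γ, j⟩ =
      e.symm (Pi.single γ ((vectorEquivPi m e w γ ᵥ* B γ) j)) := by
  rw [RingEquiv.eq_symm_apply]
  simp only [vecMul, dotProduct, blockMatrix_apply, vectorEquivPi_apply, map_sum, map_mul,
    RingEquiv.apply_symm_apply]
  rw [← AddMonoidHom.single_apply, map_sum]
  simp only [AddMonoidHom.single_apply, Pi.single_mul_right]

theorem zeroSet_blockMatrix (e : R ≃+* ∀ γ, A γ) (B : ∀ γ, Matrix m (n γ) (A γ)) :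
    zeroSet (blockMatrix e B) =
      vectorEquivPi m e ⁻¹' Set.univ.pi fun γ => zeroSet (B γ) := by
  ext w
  simp only [Set.mem_preimage, Set.mem_univ_pi, mem_zeroSet]
  simp only [funext_iff, Sigma.forall, vecMul_blockMatrix_apply, Pi.zero_apply]
  simp only [EmbeddingLike.map_eq_zero_iff, Pi.single_eq_zero_iff]

theorem zeroSet_blockMatrix_inj (e : R ≃+* ∀ γ, A γ) {B C : ∀ γ, Matrix m (n γ) (A γ)} :
    zeroSet (blockMatrix e B) = zeroSet (blockMatrix e C) ↔
      ∀ γ, zeroSet (B γ) = zeroSet (C γ) := by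
  rw [zeroSet_blockMatrix, zeroSet_blockMatrix,
    (vectorEquivPi m e).surjective.preimage_injective.eq_iff,
    univ_pi_eq_univ_pi_iff fun γ => zeroSet_nonempty (B γ)]

theorem mul_blockMatrix (e : R ≃+* ∀ γ, A γ) (S : Matrix l m R)
    (B : ∀ γ, Matrix m (n γ) (A γ)) :
    S * blockMatrix e B = blockMatrix e fun γ => S.map (e · γ) * B γ := by
  ext i ⟨γ, j⟩
  exact vecMul_blockMatrix_apply e B (S i) γ j

theorem zeroSet_blockMatrix_eq_iff_general (e : R ≃+* ∀ γ, A γ)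
    (B : ∀ γ, Matrix m (n γ) (A γ)) (S : Matrix m m R) :
    zeroSet (S * blockMatrix e B) = zeroSet (blockMatrix e B) ↔
      ∀ γ, zeroSet (S.map (e · γ) * B γ) = zeroSet (B γ) := by
  rw [mul_blockMatrix, zeroSet_blockMatrix_inj]

end BlockMatrix

theorem map_intCast_map_apply {κ m n R : Type*} {A : κ → Type*} [NonAssocRing R]
    [∀ γ, NonAssocRing (A γ)] (e : R ≃+* ∀ γ, A γ) (S : Matrix m n ℤ) (γ : κ) :
    (S.map (Int.cast : ℤ → R)).map (e · γ) = S.map Int.cast := by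
  ext
  simp only [map_apply, map_intCast, Pi.intCast_apply]

section ZMod

open scoped Function

variable {κ : Type*}

theorem pairwise_coprime_pow_of_prime {p : κ → ℕ} (hp : ∀ γ, (p γ).Prime)
    (hinj : Function.Injective p) (k : κ → ℕ) :
    Pairwise (Nat.Coprime on fun γ => p γ ^ k γ) :=
  fun _ _ hne => Nat.coprime_pow_primes _ _ (hp _) (hp _) (hinj.ne hne)

theorem eq_blockMatrix_prodEquivPi {m : Type*} {n : κ → Type*} [Fintype κ] [DecidableEq κ]
    {q : κ → ℕ} (hq : Pairwise (Nat.Coprime on q)) {B : ∀ γ, Matrix m (n γ) (ZMod (q γ))}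
    {M : Matrix m (Σ γ, n γ) (ZMod (∏ γ, q γ))}
    (hM : ∀ i γ j,
      ZMod.castHom (Finset.dvd_prod_of_mem q (Finset.mem_univ γ)) (ZMod (q γ)) (M i ⟨γ, j⟩) =
        B γ i j ∧
      ∀ δ, δ ≠ γ → ZMod.castHom (Finset.dvd_prod_of_mem q (Finset.mem_univ δ)) (ZMod (q δ))
        (M i ⟨γ, j⟩) = 0) :
    M = blockMatrix (ZMod.prodEquivPi q hq) B := by
  ext i ⟨γ, j⟩
  rw [blockMatrix_apply, RingEquiv.eq_symm_apply]
  refine Function.eq_update_iff.mpr ?_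
  simpa only [ZMod.prodEquivPi_apply, Pi.zero_apply] using hM i γ j

end ZMod

/-- Let `p_1, …, p_g` be distinct primes, `k_γ ≥ 1`, `N = ∏ p_γ^{k_γ}`, and
for each `γ` let `ι_γ : ℤ/p_γ^{k_γ} → ℤ/N` be the additive embedding
characterized by: `ι_γ x` is congruent to `x` mod `p_γ^{k_γ}` and congruent
to `0` mod `p_δ^{k_δ}` for all `δ ≠ γ`.  Given matrices
`B_γ ∈ M_{t×a_γ}(ℤ/p_γ^{k_γ})`, let `B` be the block matrix over `ℤ/N`
whose `γ`-th block of columns is the entrywise image `ι_γ (B_γ)`.  Then for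
any integer matrix `S ∈ M_t(ℤ)`, `Z(SB) = Z(B)` in `(ℤ/N)^t` if and only if
`Z(S B_γ) = Z(B_γ)` in `(ℤ/p_γ^{k_γ})^t` for every `γ`. -/
theorem zeroSet_blockMatrix_eq_iff {g t : ℕ} (p k : Fin g → ℕ)
    (hp : ∀ γ, (p γ).Prime) (hinj : Function.Injective p)
    (hk : ∀ γ, 1 ≤ k γ) (a : Fin g → ℕ)
    (B : (γ : Fin g) → Matrix (Fin t) (Fin (a γ)) (ZMod (p γ ^ k γ)))
    (ι : (γ : Fin g) → ZMod (p γ ^ k γ) → ZMod (∏ γ, p γ ^ k γ))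
    (hι : ∀ (γ : Fin g) (x : ZMod (p γ ^ k γ)),
      ZMod.castHom (Finset.dvd_prod_of_mem (fun γ => p γ ^ k γ)
          (Finset.mem_univ γ)) (ZMod (p γ ^ k γ)) (ι γ x) = x ∧
      ∀ δ : Fin g, δ ≠ γ →
        ZMod.castHom (Finset.dvd_prod_of_mem (fun γ => p γ ^ k γ)
          (Finset.mem_univ δ)) (ZMod (p δ ^ k δ)) (ι γ x) = 0)
    (Bbig : Matrix (Fin t) ((γ : Fin g) × Fin (a γ)) (ZMod (∏ γ, p γ ^ k γ)))
    (hB : ∀ (i : Fin t) (γ : Fin g) (j : Fin (a γ)),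
      Bbig i ⟨γ, j⟩ = ι γ (B γ i j))
    (S : Matrix (Fin t) (Fin t) ℤ) :
    ({w : Fin t → ZMod (∏ γ, p γ ^ k γ) |
        w ᵥ* (S.map Int.cast * Bbig) = 0} =
      {w : Fin t → ZMod (∏ γ, p γ ^ k γ) | w ᵥ* Bbig = 0}) ↔
    ∀ γ : Fin g,
      {w : Fin t → ZMod (p γ ^ k γ) | w ᵥ* (S.map Int.cast * B γ) = 0} =
        {w : Fin t → ZMod (p γ ^ k γ) | w ᵥ* B γ = 0} := by
  have hq := pairwise_coprime_pow_of_prime hp hinj k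
  obtain rfl := eq_blockMatrix_prodEquivPi hq fun i γ j => (hB i γ j).symm ▸ hι γ (B γ i j)
  have h := zeroSet_blockMatrix_eq_iff_general (ZMod.prodEquivPi _ hq) B (S.map Int.cast)
  simp only [map_intCast_map_apply] at h
  exact h
end
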